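/- Let λ ≥ 2 and n ≥ 1 be integers. Let S be a nonzero rational trigonometric polynomial nonnegative on ℝⁿ and let τ be a rational trigonometric polynomial with τ(0) = 1 satisfying the oblique sub-QMF condition: 1/S(λξ) − Σ_{γ∈Γ} |τ(ξ + γ)|²/S(ξ + γ) ≥ 0 for all ξ at which this expression is defined. Define f_0(ξ) := χ_{[−π,π)ⁿ}(ξ)·S(ξ)^{−1/2} and, for m ≥ 1, f_m(ξ) := χ_{[−λ^m π, λ^m π)ⁿ}(ξ)·S(λ^{−m}ξ)^{−1/2}·Π_{j=1}^{m} τ(λ^{−j}ξ). Then for every m ≥ 0 and all ξ at which both sides are defined, the bracket product satisfies [f_m, f_m](ξ) := Σ_{k∈ℤⁿ} |f_m(ξ + 2πk)|² ≤ 1/S(ξ). -/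

import Mathlib

open MeasureTheory Finset Filter Topology

noncomputable section

/-- `f` is a trigonometric polynomial on ℝⁿ: a finite sum ξ ↦ Σ_{k∈F} h(k) e^{−i k·ξ}. -/
def IsTrigPoly (n : ℕ) (f : (Fin n → ℝ) → ℂ) : Prop :=
  ∃ (F : Finset (Fin n → ℤ)) (h : (Fin n → ℤ) → ℂ),
    ∀ ξ : Fin n → ℝ,
      f ξ = ∑ k ∈ F, h k * Complex.exp (-Complex.I * ∑ i, (k i : ℂ) * (ξ i : ℂ))

/-- Λ = {0,…,λ−1}ⁿ as a finite subset of ℤⁿ. -/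
def Lambda (lam n : ℕ) : Finset (Fin n → ℤ) :=
  Fintype.piFinset fun _ => Finset.Ico (0 : ℤ) (lam : ℤ)

/-- The translate ξ + (2π/λ)·ρ, i.e. ξ + γ for γ = (2π/λ)ρ ∈ Γ. -/
def gshift (lam n : ℕ) (ξ : Fin n → ℝ) (ρ : Fin n → ℤ) : Fin n → ℝ :=
  fun i => ξ i + (2 * Real.pi / lam) * (ρ i : ℝ)

/-- e^{i ν·ξ}. -/
def eI (n : ℕ) (ν : Fin n → ℤ) (ξ : Fin n → ℝ) : ℂ :=
  Complex.exp (Complex.I * ∑ i, (ν i : ℂ) * (ξ i : ℂ))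

/-- The dilate λ·ξ. -/
def dil (lam n : ℕ) (ξ : Fin n → ℝ) : Fin n → ℝ := fun i => (lam : ℝ) * ξ i
/-- A rational trigonometric polynomial: a quotient of two trigonometric polynomials
(with denominator not identically zero).  Its value at ξ (using Lean's total division,
with junk value 0 where the denominator vanishes) is `num ξ / den ξ`; it is *defined*
at ξ precisely when `den ξ ≠ 0`. -/
structure RatTrigPoly (n : ℕ) where
  num : (Fin n → ℝ) → ℂ
  den : (Fin n → ℝ) → ℂ
  num_trig : IsTrigPoly n num
  den_trig : IsTrigPoly n den
  den_ne : ∃ ξ, den ξ ≠ 0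

/-- Pointwise value of a rational trigonometric polynomial. -/
def RatTrigPoly.eval {n : ℕ} (f : RatTrigPoly n) (ξ : Fin n → ℝ) : ℂ := f.num ξ / f.den ξ

instance {n : ℕ} : CoeFun (RatTrigPoly n) (fun _ => (Fin n → ℝ) → ℂ) := ⟨RatTrigPoly.eval⟩

/-- `f` is defined at `ξ` iff its denominator does not vanish there. -/
def RatTrigPoly.DefinedAt {n : ℕ} (f : RatTrigPoly n) (ξ : Fin n → ℝ) : Prop := f.den ξ ≠ 0

/-!
Write `v = 1/S`. The points `(ξ + 2πk)/λ^m` modulo `2πℤⁿ` are the preimages of `ξ` under the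
`m`-th iterate of the dilation, one for each residue class of `k` modulo `λ^m`, and the sub-QMF
condition says that replacing a point by its `λⁿ` preimages under one dilation, weighted by `|τ|²`,
does not increase `v`. Iterating gives the bound `v ξ` for the weighted sum of `v` over the
preimages under the `m`-th iterate. The cube `[-λ^m π, λ^m π)ⁿ` selects exactly one translate
`ξ + 2πk` for each residue class, so this sum is the bracket product.

The sub-QMF condition is only available where all its terms are defined. This is enough for the
iteration at generic `ξ`, and the remaining `ξ` follow by continuity and the Baire category theorem.
-/

section Residual

lemma tendsto_residual_smul_add {𝕜 E : Type*} [DivisionRing 𝕜] [AddGroup E] [TopologicalSpace E]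
    [ContinuousAdd E] [MulAction 𝕜 E] [ContinuousConstSMul 𝕜 E] {a : 𝕜} (ha : a ≠ 0) (c : E) :
    Tendsto (fun x : E => a • x + c) (residual E) (residual E) :=
  tendsto_residual_of_isOpenMap (by fun_prop) ((isOpenMap_add_right c).comp (isOpenMap_smul₀ ha))

lemma le_of_eventually_residual_le {X α : Type*} [TopologicalSpace X] [BaireSpace X]
    [TopologicalSpace α] [Preorder α] [OrderClosedTopology α] {f g : X → α} {x : X}
    (hf : ContinuousAt f x) (hg : ContinuousAt g x) (h : ∀ᶠ y in residual X, f y ≤ g y) :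
    f x ≤ g x :=
  hf.continuousWithinAt.closure_le (dense_of_mem_residual h x) hg.continuousWithinAt fun _ hy => hy

lemma eventually_residual_ne_zero_of_analyticOnNhd {E F : Type*} [NormedAddCommGroup E]
    [NormedSpace ℝ E] [NormedAddCommGroup F] [NormedSpace ℝ F] {f : E → F}
    (hf : AnalyticOnNhd ℝ f Set.univ) (hne : ∃ x, f x ≠ 0) : ∀ᶠ x in residual E, f x ≠ 0 := by
  have hcont : Continuous f := continuousOn_univ.mp hf.continuousOn
  refine residual_of_dense_open (isOpen_ne_fun hcont continuous_const) ?_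
  change Dense {x | f x = 0}ᶜ
  rw [← interior_eq_empty_iff_dense_compl, Set.eq_empty_iff_forall_notMem]
  intro x hx
  obtain ⟨y, hy⟩ := hne
  exact hy (hf.eqOn_zero_of_preconnected_of_eventuallyEq_zero isPreconnected_univ
    (Set.mem_univ x) (mem_interior_iff_mem_nhds.mp hx) (Set.mem_univ y))

end Residual

/-- Invariance of a function on `ℝⁿ` under translation by `2πℤⁿ`. -/
def IsTwoPiPeriodic {n : ℕ} {α : Type*} (g : (Fin n → ℝ) → α) : Prop :=
  ∀ k : Fin n → ℤ, Function.Periodic g fun i => 2 * Real.pi * (k i : ℝ)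

namespace IsTrigPoly

variable {n : ℕ} {f : (Fin n → ℝ) → ℂ}

lemma isTwoPiPeriodic (hf : IsTrigPoly n f) : IsTwoPiPeriodic f := by
  obtain ⟨F, h, hF⟩ := hf
  intro k ξ
  rw [hF, hF]
  refine Finset.sum_congr rfl fun l _ => congrArg (h l * ·) ?_
  refine Complex.exp_eq_exp_iff_exists_int.mpr ⟨-∑ i, l i * k i, ?_⟩
  simp only [Pi.add_apply]
  push_cast
  simp only [mul_add, Finset.sum_add_distrib, neg_mul, Finset.sum_mul, Finset.mul_sum]
  congr 1
  rw [← Finset.sum_neg_distrib]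
  exact Finset.sum_congr rfl fun i _ => by ring

lemma analyticOnNhd (hf : IsTrigPoly n f) : AnalyticOnNhd ℝ f Set.univ := by
  obtain ⟨F, h, hF⟩ := hf
  rw [funext hF]
  have hcoord (i : Fin n) (x : Fin n → ℝ) :
      AnalyticAt ℝ (fun ξ : Fin n → ℝ => ((ξ i : ℝ) : ℂ)) x :=
    (Complex.ofRealCLM.comp
      (ContinuousLinearMap.proj (R := ℝ) (φ := fun _ : Fin n => ℝ) i)).analyticAt x
  intro x _
  refine Finset.analyticAt_fun_sum _ fun k _ => analyticAt_const.mul ?_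
  refine (analyticAt_cexp.restrictScalars (𝕜 := ℝ)).comp (analyticAt_const.mul ?_)
  exact Finset.analyticAt_fun_sum _ fun i _ => analyticAt_const.mul (hcoord i x)

lemma continuous (hf : IsTrigPoly n f) : Continuous f :=
  continuousOn_univ.mp hf.analyticOnNhd.continuousOn

end IsTrigPoly

namespace RatTrigPoly

variable {n : ℕ} (S : RatTrigPoly n)

/-- The real function `1 / Re S`, which is `1/S` for real-valued `S`; it vanishes where `S` has a
zero or is undefined. -/
def invRe (ξ : Fin n → ℝ) : ℝ := ((S ξ).re)⁻¹

lemma isTwoPiPeriodic : IsTwoPiPeriodic S := fun k ξ => by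
  simp only [eval, S.num_trig.isTwoPiPeriodic k ξ, S.den_trig.isTwoPiPeriodic k ξ]

lemma isTwoPiPeriodic_invRe : IsTwoPiPeriodic S.invRe := fun k ξ => by
  simp only [invRe, S.isTwoPiPeriodic k ξ]

variable {S}

lemma continuousAt {ξ : Fin n → ℝ} (h : S.DefinedAt ξ) : ContinuousAt S ξ :=
  S.num_trig.continuous.continuousAt.div S.den_trig.continuous.continuousAt h

lemma continuousAt_invRe {ξ : Fin n → ℝ} (h : S.DefinedAt ξ) (hre : (S ξ).re ≠ 0) :
    ContinuousAt S.invRe ξ :=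
  (Complex.continuous_re.continuousAt.comp (continuousAt h)).inv₀ hre

lemma invRe_nonneg (h : ∀ ξ, S.DefinedAt ξ → 0 ≤ (S ξ).re) : 0 ≤ S.invRe := fun ξ => by
  by_cases hξ : S.DefinedAt ξ
  · exact inv_nonneg.mpr (h ξ hξ)
  · simp [invRe, eval, not_not.mp hξ]

variable (S) in
lemma eventually_residual_definedAt : ∀ᶠ ξ in residual (Fin n → ℝ), S.DefinedAt ξ :=
  eventually_residual_ne_zero_of_analyticOnNhd S.den_trig.analyticOnNhd S.den_ne

lemma eventually_residual_ne_zero (h : ∃ ξ, S ξ ≠ 0) :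
    ∀ᶠ ξ in residual (Fin n → ℝ), S ξ ≠ 0 := by
  have hnum : ∃ ξ, S.num ξ ≠ 0 := h.imp fun ξ hξ => (div_ne_zero_iff.mp hξ).1
  filter_upwards [eventually_residual_ne_zero_of_analyticOnNhd S.num_trig.analyticOnNhd hnum,
    S.eventually_residual_definedAt] with ξ h₁ h₂ using div_ne_zero h₁ h₂

end RatTrigPoly

section ResidueSystems

variable {ι : Type*} [Fintype ι] [DecidableEq ι] {M : Type*} [AddCommMonoid M]

lemma sum_piFinset_Ico_eq_of_emod_invariant {N : ℤ} (hN : 0 ≤ N) {g : (ι → ℤ) → M}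
    (hg : ∀ k, g (fun i => k i % N) = g k) (a : ι → ℤ) :
    ∑ k ∈ Fintype.piFinset fun i => Ico (a i) (a i + N), g k =
      ∑ k ∈ Fintype.piFinset fun _ => Ico 0 N, g k := by
  have himage (i : ι) := Int.image_Ico_emod (a i) N hN
  have hinj (i : ι) : Set.InjOn (· % N) (Ico (a i) (a i + N) : Finset ℤ) := by
    rw [← card_image_iff, himage i, Int.card_Ico, Int.card_Ico, sub_zero, add_sub_cancel_left]
  rw [show (fun _ : ι => Ico 0 N) = fun i => (Ico (a i) (a i + N)).image (· % N) from
    funext fun i => (himage i).symm, Fintype.piFinset_image, Finset.sum_image]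
  · exact Finset.sum_congr rfl fun k _ => (hg k).symm
  · intro k hk l hl hkl
    simp only [Finset.mem_coe, Fintype.mem_piFinset] at hk hl
    exact funext fun i => hinj i (hk i) (hl i) (congrFun hkl i)

end ResidueSystems

lemma mem_Lambda {N n : ℕ} {k : Fin n → ℤ} : k ∈ Lambda N n ↔ ∀ i, 0 ≤ k i ∧ k i < N := by
  simp only [Lambda, Fintype.mem_piFinset, Finset.mem_Ico]

lemma sum_Lambda_mul {n N : ℕ} {M : Type*} [AddCommMonoid M] (hN : 0 < N) (L : ℕ)
    (g : (Fin n → ℤ) → M) :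
    ∑ k ∈ Lambda (N * L) n, g k =
      ∑ r ∈ Lambda N n, ∑ ρ ∈ Lambda L n, g fun i => r i + N * ρ i := by
  have hN' : (0 : ℤ) < N := mod_cast hN
  rw [← Finset.sum_product']
  refine Finset.sum_nbij' (fun k => (fun i => k i % N, fun i => k i / N))
    (fun p i => p.1 i + N * p.2 i) ?_ ?_ ?_ ?_ ?_
  · intro k hk
    simp only [Finset.mem_product, mem_Lambda, Nat.cast_mul] at hk ⊢
    exact ⟨fun i => ⟨Int.emod_nonneg _ hN'.ne', Int.emod_lt_of_pos _ hN'⟩,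
      fun i => ⟨Int.ediv_nonneg (hk i).1 hN'.le,
        Int.ediv_lt_of_lt_mul hN' (by linarith [(hk i).2])⟩⟩
  · rintro ⟨r, ρ⟩ hp
    simp only [Finset.mem_product, mem_Lambda, Nat.cast_mul] at hp ⊢
    intro i
    obtain ⟨⟨hr₀, hr⟩, hρ₀, hρ⟩ := And.intro (hp.1 i) (hp.2 i)
    exact ⟨by positivity, by nlinarith⟩
  · exact fun k _ => funext fun i => Int.emod_add_mul_ediv _ _
  · rintro ⟨r, ρ⟩ hp
    simp only [Finset.mem_product, mem_Lambda] at hp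
    refine Prod.ext (funext fun i => ?_) (funext fun i => ?_)
    · simp only [Int.add_mul_emod_self_left, Int.emod_eq_of_lt (hp.1 i).1 (hp.1 i).2]
    · simp only [Int.add_mul_ediv_left _ _ hN'.ne',
        Int.ediv_eq_zero_of_lt (hp.1 i).1 (hp.1 i).2, zero_add]
  · exact fun k _ => congrArg g (funext fun i => (Int.emod_add_mul_ediv _ _).symm)

/-- The inverse branch `ξ ↦ λ^{-j}(ξ + 2πk)` of the `j`-th iterate of the dilation by `λ` on
`ℝⁿ / 2πℤⁿ`. -/
def invBranch (lam : ℕ) {n : ℕ} (j : ℕ) (k : Fin n → ℤ) (ξ : Fin n → ℝ) : Fin n → ℝ :=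
  fun i => (ξ i + 2 * Real.pi * (k i : ℝ)) / (lam : ℝ) ^ j

/-- The oblique sub-QMF condition at `ξ`, in terms of `v = 1/S`. -/
def SubQMFAt (lam : ℕ) {n : ℕ} (v : (Fin n → ℝ) → ℝ) (τ : (Fin n → ℝ) → ℂ) (ξ : Fin n → ℝ) :
    Prop :=
  ∑ ρ ∈ Lambda lam n, ‖τ (gshift lam n ξ ρ)‖ ^ 2 * v (gshift lam n ξ ρ) ≤ v (dil lam n ξ)

/-- The value `Π_{j=1}^m |τ|²(λ^{-j}(ξ + 2πk)) · v(λ^{-m}(ξ + 2πk))` that `|f_m|²` takes at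
`ξ + 2πk` when this point lies in the cube supporting `f_m`. -/
def cascadeWeight (lam : ℕ) {n : ℕ} (v : (Fin n → ℝ) → ℝ) (τ : (Fin n → ℝ) → ℂ) (m : ℕ)
    (k : Fin n → ℤ) (ξ : Fin n → ℝ) : ℝ :=
  (∏ j ∈ Finset.Icc 1 m, ‖τ (invBranch lam j k ξ)‖ ^ 2) * v (invBranch lam m k ξ)

/-- The half-open cube `[-λ^m π, λ^m π)ⁿ`. -/
def cascadeCube (lam n m : ℕ) : Set (Fin n → ℝ) :=
  {η | ∀ i, -((lam : ℝ) ^ m * Real.pi) ≤ η i ∧ η i < (lam : ℝ) ^ m * Real.pi}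

/-- The function `f_m`, in terms of `v = 1/S`. -/
def cascade (lam : ℕ) {n : ℕ} (v : (Fin n → ℝ) → ℝ) (τ : (Fin n → ℝ) → ℂ) (m : ℕ) :
    (Fin n → ℝ) → ℂ :=
  (cascadeCube lam n m).indicator fun ξ =>
    (√(v fun i => ξ i / (lam : ℝ) ^ m) : ℂ) * ∏ j ∈ Finset.Icc 1 m, τ fun i => ξ i / (lam : ℝ) ^ j

section Cascade

variable {lam n : ℕ} {v : (Fin n → ℝ) → ℝ} {τ : (Fin n → ℝ) → ℂ}

lemma continuous_invBranch (j : ℕ) (k : Fin n → ℤ) : Continuous (invBranch lam j k) := by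
  unfold invBranch
  fun_prop

lemma tendsto_invBranch_residual (hlam : 0 < lam) (j : ℕ) (k : Fin n → ℤ) :
    Tendsto (invBranch lam j k) (residual _) (residual _) := by
  have ha : ((lam : ℝ) ^ j)⁻¹ ≠ 0 := by positivity
  convert tendsto_residual_smul_add ha (fun i => 2 * Real.pi * (k i : ℝ) / (lam : ℝ) ^ j)
    using 2 with ξ
  ext i
  simp only [invBranch, Pi.add_apply, Pi.smul_apply, smul_eq_mul]
  ring

lemma tendsto_dil_residual (hlam : 0 < lam) :
    Tendsto (dil lam n) (residual _) (residual _) := by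
  have ha : (lam : ℝ) ≠ 0 := by positivity
  convert tendsto_residual_smul_add ha (0 : Fin n → ℝ) using 2 with ξ
  rw [add_zero]
  rfl

lemma tendsto_gshift_residual (ρ : Fin n → ℤ) :
    Tendsto (gshift lam n · ρ) (residual _) (residual _) := by
  convert tendsto_residual_smul_add (one_ne_zero (α := ℝ))
    (fun i => 2 * Real.pi / lam * (ρ i : ℝ)) using 2 with ξ
  rw [one_smul]
  rfl

lemma invBranch_zero_zero (ξ : Fin n → ℝ) : invBranch lam 0 0 ξ = ξ := by
  ext i
  simp [invBranch]

lemma dil_invBranch_succ (hlam : 0 < lam) (m : ℕ) (k : Fin n → ℤ) (ξ : Fin n → ℝ) :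
    dil lam n (invBranch lam (m + 1) k ξ) = invBranch lam m k ξ := by
  ext i
  simp only [dil, invBranch, pow_succ]
  field_simp

lemma gshift_invBranch_succ (hlam : 0 < lam) (m : ℕ) (k ρ : Fin n → ℤ) (ξ : Fin n → ℝ) :
    gshift lam n (invBranch lam (m + 1) k ξ) ρ =
      invBranch lam (m + 1) (fun i => k i + (lam ^ m : ℕ) * ρ i) ξ := by
  ext i
  simp only [gshift, invBranch, pow_succ]
  push_cast
  field_simp
  ring

lemma IsTwoPiPeriodic.invBranch_add_mul (hlam : 0 < lam) {α : Type*} {g : (Fin n → ℝ) → α}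
    (hg : IsTwoPiPeriodic g) {j m : ℕ} (hjm : j ≤ m) (k l : Fin n → ℤ) (ξ : Fin n → ℝ) :
    g (invBranch lam j (fun i => k i + (lam ^ m : ℕ) * l i) ξ) = g (invBranch lam j k ξ) := by
  obtain ⟨d, rfl⟩ := Nat.exists_eq_add_of_le hjm
  rw [← hg (fun i => (lam : ℤ) ^ d * l i) (invBranch lam j k ξ)]
  congr 1
  ext i
  simp only [invBranch, Pi.add_apply]
  push_cast
  field_simp
  ring

lemma cascadeWeight_emod (hlam : 0 < lam) (hv : IsTwoPiPeriodic v) (hτ : IsTwoPiPeriodic τ)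
    (m : ℕ) (k : Fin n → ℤ) (ξ : Fin n → ℝ) :
    cascadeWeight lam v τ m (fun i => k i % (lam ^ m : ℕ)) ξ = cascadeWeight lam v τ m k ξ := by
  have hk : k = fun i => k i % (lam ^ m : ℕ) + (lam ^ m : ℕ) * (k i / (lam ^ m : ℕ)) :=
    funext fun i => (Int.emod_add_mul_ediv _ _).symm
  conv_rhs => rw [hk]
  unfold cascadeWeight
  rw [hv.invBranch_add_mul hlam le_rfl]
  congr 1
  exact Finset.prod_congr rfl fun j hj => by
    rw [hτ.invBranch_add_mul hlam (Finset.mem_Icc.mp hj).2]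

lemma cascadeWeight_succ (hlam : 0 < lam) (hτ : IsTwoPiPeriodic τ) (m : ℕ) (r ρ : Fin n → ℤ)
    (ξ : Fin n → ℝ) :
    cascadeWeight lam v τ (m + 1) (fun i => r i + (lam ^ m : ℕ) * ρ i) ξ =
      (∏ j ∈ Finset.Icc 1 m, ‖τ (invBranch lam j r ξ)‖ ^ 2) *
        (‖τ (gshift lam n (invBranch lam (m + 1) r ξ) ρ)‖ ^ 2 *
          v (gshift lam n (invBranch lam (m + 1) r ξ) ρ)) := by
  rw [cascadeWeight, Finset.prod_Icc_succ_top (Nat.le_add_left 1 m), mul_assoc,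
    gshift_invBranch_succ hlam]
  congr 1
  exact Finset.prod_congr rfl fun j hj => by
    rw [hτ.invBranch_add_mul hlam (Finset.mem_Icc.mp hj).2]

lemma sum_cascadeWeight_succ_le (hlam : 0 < lam) (hτ : IsTwoPiPeriodic τ) (m : ℕ) {ξ : Fin n → ℝ}
    (h : ∀ k, SubQMFAt lam v τ (invBranch lam (m + 1) k ξ)) :
    ∑ k ∈ Lambda (lam ^ (m + 1)) n, cascadeWeight lam v τ (m + 1) k ξ ≤
      ∑ k ∈ Lambda (lam ^ m) n, cascadeWeight lam v τ m k ξ := by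
  rw [pow_succ, sum_Lambda_mul (pow_pos hlam m)]
  refine Finset.sum_le_sum fun r _ => ?_
  simp only [cascadeWeight_succ hlam hτ, ← Finset.mul_sum]
  have hr := h r
  rw [SubQMFAt, dil_invBranch_succ hlam] at hr
  exact mul_le_mul_of_nonneg_left hr (Finset.prod_nonneg fun _ _ => sq_nonneg _)

lemma sum_cascadeWeight_le (hlam : 0 < lam) (hτ : IsTwoPiPeriodic τ) {ξ : Fin n → ℝ}
    (h : ∀ m k, SubQMFAt lam v τ (invBranch lam (m + 1) k ξ)) (m : ℕ) :
    ∑ k ∈ Lambda (lam ^ m) n, cascadeWeight lam v τ m k ξ ≤ v ξ := by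
  induction m with
  | zero =>
    have hzero : Lambda (lam ^ 0) n = {0} := by
      ext k
      simp only [mem_Lambda, pow_zero, Nat.cast_one, Finset.mem_singleton, funext_iff,
        Pi.zero_apply]
      exact forall_congr' fun i => by omega
    rw [hzero, Finset.sum_singleton]
    simp [cascadeWeight, invBranch_zero_zero]
  | succ m ih => exact (sum_cascadeWeight_succ_le hlam hτ m (h m)).trans ih

lemma sum_cascadeWeight_le_of_eventually_residual (hlam : 0 < lam) (hτ : IsTwoPiPeriodic τ)
    (hQMF : ∀ᶠ ξ in residual (Fin n → ℝ), SubQMFAt lam v τ ξ) (m : ℕ) {ξ : Fin n → ℝ}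
    (hvξ : ContinuousAt v ξ) (hvm : ∀ k, ContinuousAt v (invBranch lam m k ξ))
    (hτj : ∀ k, ∀ j ∈ Finset.Icc 1 m, ContinuousAt τ (invBranch lam j k ξ)) :
    ∑ k ∈ Lambda (lam ^ m) n, cascadeWeight lam v τ m k ξ ≤ v ξ := by
  have hgeneric : ∀ᶠ η in residual (Fin n → ℝ), ∀ j k, SubQMFAt lam v τ (invBranch lam j k η) := by
    simp only [eventually_countable_forall]
    exact fun j k => (tendsto_invBranch_residual hlam j k).eventually hQMF
  have hcont : ContinuousAt (fun η => ∑ k ∈ Lambda (lam ^ m) n, cascadeWeight lam v τ m k η) ξ := by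
    have hbranch (j : ℕ) (k : Fin n → ℤ) : ContinuousAt (invBranch lam j k) ξ :=
      (continuous_invBranch j k).continuousAt
    refine tendsto_finsetSum _ fun k _ => Tendsto.mul (tendsto_finsetProd _ fun j hj => ?_) ?_
    · exact (ContinuousAt.comp (hτj k j hj) (hbranch j k)).norm.pow 2
    · exact ContinuousAt.comp (hvm k) (hbranch m k)
  exact le_of_eventually_residual_le hcont hvξ
    (hgeneric.mono fun η hη => sum_cascadeWeight_le hlam hτ (fun j => hη (j + 1)) m)

lemma add_two_pi_mul_mem_cascadeCube_iff {m : ℕ} {ξ : Fin n → ℝ} {k : Fin n → ℤ} :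
    (fun i => ξ i + 2 * Real.pi * (k i : ℝ)) ∈ cascadeCube lam n m ↔
      k ∈ Fintype.piFinset fun i =>
        Ico ⌈(-((lam : ℝ) ^ m * Real.pi) - ξ i) / (2 * Real.pi)⌉
          (⌈(-((lam : ℝ) ^ m * Real.pi) - ξ i) / (2 * Real.pi)⌉ + (lam ^ m : ℕ)) := by
  have hpi : (0 : ℝ) < 2 * Real.pi := Real.two_pi_pos
  simp only [cascadeCube, Set.mem_ofPred_eq, Fintype.mem_piFinset, Finset.mem_Ico]
  refine forall_congr' fun i => and_congr ?_ ?_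
  · rw [Int.ceil_le, div_le_iff₀ hpi]
    constructor <;> intro h <;> linarith
  · rw [← Int.ceil_add_natCast, Int.lt_ceil, div_add' _ _ _ hpi.ne', lt_div_iff₀ hpi]
    push_cast
    constructor <;> intro h <;> linarith

lemma norm_sq_cascade_add_two_pi_mul (hv : 0 ≤ v) {m : ℕ} {ξ : Fin n → ℝ} {k : Fin n → ℤ}
    (hk : (fun i => ξ i + 2 * Real.pi * (k i : ℝ)) ∈ cascadeCube lam n m) :
    ‖cascade lam v τ m fun i => ξ i + 2 * Real.pi * (k i : ℝ)‖ ^ 2 =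
      cascadeWeight lam v τ m k ξ := by
  rw [cascade, Set.indicator_of_mem hk, norm_mul, mul_pow, Complex.norm_real, Real.norm_eq_abs,
    sq_abs, Real.sq_sqrt (hv _), norm_prod, ← Finset.prod_pow, mul_comm]
  rfl

lemma hasSum_norm_sq_cascade (hlam : 0 < lam) (hv : 0 ≤ v) (hv_per : IsTwoPiPeriodic v)
    (hτ_per : IsTwoPiPeriodic τ) (m : ℕ) (ξ : Fin n → ℝ) :
    HasSum (fun k : Fin n → ℤ => ‖cascade lam v τ m fun i => ξ i + 2 * Real.pi * (k i : ℝ)‖ ^ 2)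
      (∑ k ∈ Lambda (lam ^ m) n, cascadeWeight lam v τ m k ξ) := by
  rw [Lambda, ← sum_piFinset_Ico_eq_of_emod_invariant (Nat.cast_nonneg _)
    (fun k => cascadeWeight_emod hlam hv_per hτ_per m k ξ),
    ← Finset.sum_congr rfl fun k hk =>
      norm_sq_cascade_add_two_pi_mul hv (add_two_pi_mul_mem_cascadeCube_iff.mpr hk)]
  refine hasSum_sum_of_ne_finset_zero fun k hk => ?_
  rw [cascade, Set.indicator_of_notMem (mt add_two_pi_mul_mem_cascadeCube_iff.mp hk), norm_zero,
    zero_pow two_ne_zero]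

end Cascade

section RationalCascade

variable {lam n : ℕ} {S τ : RatTrigPoly n}

lemma eventually_residual_subQMFAt (hlam : 0 < lam) (hSne : ∃ ξ, S ξ ≠ 0)
    (hQMF : ∀ ξ : Fin n → ℝ,
      (S.DefinedAt (dil lam n ξ) ∧ S (dil lam n ξ) ≠ 0) →
      (∀ ρ ∈ Lambda lam n, τ.DefinedAt (gshift lam n ξ ρ) ∧
        S.DefinedAt (gshift lam n ξ ρ) ∧ S (gshift lam n ξ ρ) ≠ 0) →
      SubQMFAt lam S.invRe τ ξ) :
    ∀ᶠ ξ in residual (Fin n → ℝ), SubQMFAt lam S.invRe τ ξ := by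
  have hS := S.eventually_residual_definedAt.and (RatTrigPoly.eventually_residual_ne_zero hSne)
  have hτS := τ.eventually_residual_definedAt.and hS
  filter_upwards [(tendsto_dil_residual hlam).eventually hS, eventually_countable_forall.mpr
    fun ρ => (tendsto_gshift_residual (lam := lam) ρ).eventually hτS] with ξ hdil hshift
  exact hQMF ξ hdil fun ρ _ => hshift ρ

lemma cascade_invRe_apply (m : ℕ) (ξ : Fin n → ℝ) :
    cascade lam S.invRe τ m ξ =
      (cascadeCube lam n m).indicator (fun _ => (1 : ℂ)) ξ *
        ((Real.sqrt ((S (fun i => ξ i / (lam : ℝ) ^ m)).re))⁻¹ : ℂ) *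
        ∏ j ∈ Finset.Icc 1 m, τ (fun i => ξ i / (lam : ℝ) ^ j) := by
  by_cases hξ : ξ ∈ cascadeCube lam n m
  · simp only [cascade, RatTrigPoly.invRe, Set.indicator_of_mem hξ, Real.sqrt_inv,
      Complex.ofReal_inv, one_mul]
  · simp only [cascade, Set.indicator_of_notMem hξ, zero_mul]

end RationalCascade

theorem bracket_product_bound_general {lam n : ℕ} (hlam : 0 < lam) {v : (Fin n → ℝ) → ℝ}
    {τ : (Fin n → ℝ) → ℂ} (hv : 0 ≤ v) (hv_per : IsTwoPiPeriodic v) (hτ_per : IsTwoPiPeriodic τ)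
    (hQMF : ∀ᶠ ξ in residual (Fin n → ℝ), SubQMFAt lam v τ ξ) (m : ℕ) {ξ : Fin n → ℝ}
    (hvξ : ContinuousAt v ξ) (hvm : ∀ k, ContinuousAt v (invBranch lam m k ξ))
    (hτj : ∀ k, ∀ j ∈ Finset.Icc 1 m, ContinuousAt τ (invBranch lam j k ξ)) :
    (∑' k : Fin n → ℤ, ‖cascade lam v τ m fun i => ξ i + 2 * Real.pi * (k i : ℝ)‖ ^ 2) ≤ v ξ :=
  (hasSum_norm_sq_cascade hlam hv hv_per hτ_per m ξ).tsum_eq.trans_le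
    (sum_cascadeWeight_le_of_eventually_residual hlam hτ_per hQMF m hvξ hvm hτj)

/-- under the oblique sub-QMF condition, the cascade-type functions
f_m(ξ) = χ_{[−λ^mπ,λ^mπ)ⁿ}(ξ)·S(λ^{−m}ξ)^{−1/2}·Π_{j=1}^m τ(λ^{−j}ξ) satisfy the
bracket-product bound [f_m, f_m](ξ) ≤ 1/S(ξ) wherever both sides are defined. -/
theorem bracket_product_bound (lam n : ℕ) (hlam : 2 ≤ lam) (hn : 1 ≤ n)
    (S : RatTrigPoly n)
    (hSreal : ∀ ξ, S.DefinedAt ξ → (S ξ).im = 0 ∧ 0 ≤ (S ξ).re)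
    (hSne : ∃ ξ, S.DefinedAt ξ ∧ S ξ ≠ 0)
    (τ : RatTrigPoly n) (hτdef : τ.DefinedAt 0) (hτ0 : τ 0 = 1)
    (hsubQMF : ∀ ξ : Fin n → ℝ,
      (S.DefinedAt (dil lam n ξ) ∧ S (dil lam n ξ) ≠ 0) →
      (∀ ρ ∈ Lambda lam n, τ.DefinedAt (gshift lam n ξ ρ) ∧
        S.DefinedAt (gshift lam n ξ ρ) ∧ S (gshift lam n ξ ρ) ≠ 0) →
      0 ≤ ((S (dil lam n ξ)).re)⁻¹
          - ∑ ρ ∈ Lambda lam n,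
              ‖τ (gshift lam n ξ ρ)‖ ^ 2 / (S (gshift lam n ξ ρ)).re)
    (f : ℕ → (Fin n → ℝ) → ℂ)
    (hf : ∀ (m : ℕ) (ξ : Fin n → ℝ),
      f m ξ = (Set.indicator
          {η : Fin n → ℝ | ∀ i, -((lam : ℝ) ^ m * Real.pi) ≤ η i ∧
            η i < (lam : ℝ) ^ m * Real.pi} (fun _ => (1 : ℂ)) ξ) *
        ((Real.sqrt ((S (fun i => ξ i / (lam : ℝ) ^ m)).re))⁻¹ : ℂ) *
        ∏ j ∈ Finset.Icc 1 m, τ (fun i => ξ i / (lam : ℝ) ^ j)) :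
    ∀ (m : ℕ) (ξ : Fin n → ℝ),
      (S.DefinedAt ξ ∧ S ξ ≠ 0) →
      (∀ k : Fin n → ℤ,
        (S.DefinedAt (fun i => (ξ i + 2 * Real.pi * (k i : ℝ)) / (lam : ℝ) ^ m) ∧
          S (fun i => (ξ i + 2 * Real.pi * (k i : ℝ)) / (lam : ℝ) ^ m) ≠ 0) ∧
        ∀ j ∈ Finset.Icc 1 m,
          τ.DefinedAt (fun i => (ξ i + 2 * Real.pi * (k i : ℝ)) / (lam : ℝ) ^ j)) →
      (∑' k : Fin n → ℤ, ‖f m (fun i => ξ i + 2 * Real.pi * (k i : ℝ))‖ ^ 2)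
        ≤ ((S ξ).re)⁻¹ := by
  intro m ξ hξ hk
  have hlam₀ : 0 < lam := by omega
  have hre {η : Fin n → ℝ} (hη : S.DefinedAt η ∧ S η ≠ 0) : (S η).re ≠ 0 := fun h =>
    hη.2 (Complex.ext h (hSreal η hη.1).1)
  have hcascade : f m = cascade lam S.invRe τ m := funext fun η =>
    (hf m η).trans (cascade_invRe_apply m η).symm
  have hQMF : ∀ᶠ η in residual (Fin n → ℝ), SubQMFAt lam S.invRe τ η :=
    eventually_residual_subQMFAt hlam₀ (hSne.imp fun _ h => h.2) fun η hdil hshift =>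
      sub_nonneg.mp (hsubQMF η hdil hshift)
  rw [hcascade]
  exact bracket_product_bound_general hlam₀
    (RatTrigPoly.invRe_nonneg fun η hη => (hSreal η hη).2)
    S.isTwoPiPeriodic_invRe τ.isTwoPiPeriodic hQMF m (RatTrigPoly.continuousAt_invRe hξ.1 (hre hξ))
    (fun k => RatTrigPoly.continuousAt_invRe (hk k).1.1 (hre (hk k).1))
    fun k j hj => RatTrigPoly.continuousAt ((hk k).2 j hj)
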